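/- Let (P, M) be an abstract light dual multinet labeled by a quasigroup Q with labeling bijections α₁, α₂, α₃, and let B ∈ M be a block. Define S_i = {x ∈ Q : α_i(x) ∈ B} for i = 1, 2, 3. Then (S₁, S₂, S₃) is a subsquare of Q, i.e., S₁·S₂ ⊆ S₃, S₁\S₃ ⊆ S₂, and S₃/S₂ ⊆ S₁. -/

import Mathlib

/-- A quasigroup: a binary operation with left and right division. -/
structure Quasigroup (Q : Type*) where
  mul : Q → Q → Q
  ldiv : Q → Q → Q
  rdiv : Q → Q → Q
  mul_ldiv : ∀ x z, mul x (ldiv x z) = z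
  ldiv_mul : ∀ x y, ldiv x (mul x y) = y
  rdiv_mul : ∀ z y, mul (rdiv z y) y = z
  mul_rdiv : ∀ x y, rdiv (mul x y) y = x

/-- `(S₁, S₂, S₃)` is a subsquare of the quasigroup `q`. -/
def IsSubsquare {Q : Type*} (q : Quasigroup Q) (S₁ S₂ S₃ : Set Q) : Prop :=
  (∀ x ∈ S₁, ∀ y ∈ S₂, q.mul x y ∈ S₃) ∧
  (∀ x ∈ S₁, ∀ z ∈ S₃, q.ldiv x z ∈ S₂) ∧
  (∀ z ∈ S₃, ∀ y ∈ S₂, q.rdiv z y ∈ S₁)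

/-- An abstract light dual multinet with point set `P`, labeled by the
quasigroup `q` via the labeling maps `α₁, α₂, α₃`. -/
structure LightDualMultinet {Q P : Type*} (q : Quasigroup Q) where
  α₁ : Q → P
  α₂ : Q → P
  α₃ : Q → P
  inj₁ : Function.Injective α₁
  inj₂ : Function.Injective α₂
  inj₃ : Function.Injective α₃
  disj₁₂ : Disjoint (Set.range α₁) (Set.range α₂)
  disj₁₃ : Disjoint (Set.range α₁) (Set.range α₃)
  disj₂₃ : Disjoint (Set.range α₂) (Set.range α₃)
  cover : Set.range α₁ ∪ Set.range α₂ ∪ Set.range α₃ = Set.univ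
  M : Set (Set P)
  at_most_one : ∀ B ∈ M, ∀ C ∈ M, ∀ p p' : P,
    p ≠ p' → p ∈ B → p' ∈ B → p ∈ C → p' ∈ C → B = C
  collinear : ∀ x y : Q, ∃ B ∈ M, α₁ x ∈ B ∧ α₂ y ∈ B ∧ α₃ (q.mul x y) ∈ B
  nondegenerate : ∃ B ∈ M, ∃ C ∈ M, B ≠ C

/-- For any block `B` of a light dual multinet, the triple of index sets
`S_i = {x : α_i x ∈ B}` is a subsquare of the labeling quasigroup. -/
theorem block_gives_subsquare {Q P : Type*} (q : Quasigroup Q)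
    (N : @LightDualMultinet Q P q) (B : Set P) (hB : B ∈ N.M) :
    IsSubsquare q {x | N.α₁ x ∈ B} {y | N.α₂ y ∈ B} {z | N.α₃ z ∈ B} := by
  refine ⟨fun x hx y hy => ?_, fun x hx z hz => ?_, fun z hz y hy => ?_⟩
  · obtain ⟨C, hC, h1, h2, h3⟩ := N.collinear x y
    have hne : N.α₁ x ≠ N.α₂ y :=
      Set.disjoint_iff_forall_ne.mp N.disj₁₂ ⟨x, rfl⟩ ⟨y, rfl⟩
    have e := N.at_most_one B hB C hC _ _ hne hx hy h1 h2
    subst e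
    exact h3
  · obtain ⟨C, hC, h1, h2, h3⟩ := N.collinear x (q.ldiv x z)
    rw [q.mul_ldiv] at h3
    have hne : N.α₁ x ≠ N.α₃ z :=
      Set.disjoint_iff_forall_ne.mp N.disj₁₃ ⟨x, rfl⟩ ⟨z, rfl⟩
    have e := N.at_most_one B hB C hC _ _ hne hx hz h1 h3
    subst e
    exact h2
  · obtain ⟨C, hC, h1, h2, h3⟩ := N.collinear (q.rdiv z y) y
    rw [q.rdiv_mul] at h3
    have hne : N.α₂ y ≠ N.α₃ z :=
      Set.disjoint_iff_forall_ne.mp N.disj₂₃ ⟨y, rfl⟩ ⟨z, rfl⟩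
    have e := N.at_most_one B hB C hC _ _ hne hy hz h2 h3
    subst e
    exact h1
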